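/- Tightness of the factor 2 for cCHASE: fix β > 0, 0 < δ < 1 and T ≥ 2, and consider the instance with g_1(0) = δβ, g_1(1) = 0, and g_t(0) = 0, g_t(1) = δβ for all t = 2,…,T. Then the fractional schedule produced by cCHASE is x_1 = δ and x_t = 0 for t ≥ 2, its cost is CCost = 2δβ − δ²β, and cOpt = δβ. Consequently, for every ε > 0 there is an instance on which CCost(cCHASE) ≥ (2 − ε)·cOpt, so the competitive ratio of cCHASE is exactly 2. -/

import Mathlib

/-- The fractional cost `CCost` of a schedule `x`: the operating cost at time
`t` is `(1 − x t)·g_t(0) + x t·g_t(1)`, plus the switching cost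
`β·(x t − x (t−1))⁺`. -/
noncomputable def cost (T : ℕ) (β : ℝ) (g0 g1 : ℕ → ℝ) (x : ℕ → ℝ) : ℝ :=
  ∑ t ∈ Finset.Icc 1 T, ((1 - x t) * g0 t + x t * g1 t + β * max (x t - x (t - 1)) 0)

/-- The cumulative cost difference `Δ(t)`, with `Δ(0) = −β` and
`Δ(t) = min{0, max{−β, Δ(t−1) + (g_t(0) − g_t(1))}}`. -/
noncomputable def Δfun (β : ℝ) (g0 g1 : ℕ → ℝ) : ℕ → ℝ
  | 0 => -β
  | t + 1 => min 0 (max (-β) (Δfun β g0 g1 t + (g0 (t + 1) - g1 (t + 1))))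

/-- The fractional offline optimal value `cOpt` of problem cSP: the infimum of
`CCost` over all fractional schedules in `[0,1]` starting at `0`. -/
noncomputable def copt (T : ℕ) (β : ℝ) (g0 g1 : ℕ → ℝ) : ℝ :=
  sInf {c : ℝ | ∃ x : ℕ → ℝ, (∀ t, 0 ≤ x t ∧ x t ≤ 1) ∧ x 0 = 0 ∧ c = cost T β g0 g1 x}

/-!
After division by `β`, cCHASE moves by `(g0 t - g1 t) / β` at each step, clamped to `[0, 1]`. When
state `1` has an advantage `a ≤ β` at time `1` only, cCHASE moves to `a / β`. It thereby pays `a`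
for switching and still pays `(1 - a / β) * a` for not having moved all the way, while staying at
`0` costs `a` in total. The ratio `2 - a / β` tends to `2` as `a → 0`.
-/

/-- The per-step cost of a fractional schedule `x`, i.e. the summand of `cost` at time `t`; it lets
the sum be split after the first step. -/
noncomputable def stepCost (β : ℝ) (g0 g1 x : ℕ → ℝ) (t : ℕ) : ℝ :=
  (1 - x t) * g0 t + x t * g1 t + β * max (x t - x (t - 1)) 0

/-- The schedule of the online algorithm cCHASE, extended to `t = 0` by the initial state
`x_0 = 0`. -/
noncomputable def cChase (β : ℝ) (g0 g1 : ℕ → ℝ) (t : ℕ) : ℝ :=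
  (β + Δfun β g0 g1 t) / β

/-- Instances on which demand for state `1` is confined to the first step: the advantage
`g0 1 - g1 1` of state `1` at time `1` lies in `[0, β]`, and from time `2` to `T` state `0` is free
while state `1` costs at least that advantage. The tight instance for cCHASE is of this kind. -/
structure IsDemandSpike (T : ℕ) (β : ℝ) (g0 g1 : ℕ → ℝ) : Prop where
  g1_one_le : g1 1 ≤ g0 1
  g0_one_le : g0 1 ≤ g1 1 + β
  g0_eq_zero : ∀ t, 1 < t → t ≤ T → g0 t = 0
  sub_le_g1 : ∀ t, 1 < t → t ≤ T → g0 1 - g1 1 ≤ g1 t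

variable {T t : ℕ} {β : ℝ} {g0 g1 x : ℕ → ℝ}

theorem cost_eq_stepCost_one_add_sum (hT : 1 ≤ T) :
    cost T β g0 g1 x = stepCost β g0 g1 x 1 + ∑ t ∈ Finset.Ioc 1 T, stepCost β g0 g1 x t :=
  (Finset.add_sum_Ioc_eq_sum_Icc (f := stepCost β g0 g1 x) hT).symm

theorem stepCost_nonneg (hβ : 0 ≤ β) (hg0 : 0 ≤ g0 t) (hg1 : 0 ≤ g1 t)
    (hx : x t ∈ Set.Icc 0 1) : 0 ≤ stepCost β g0 g1 x t :=
  add_nonneg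
    (add_nonneg (mul_nonneg (sub_nonneg.2 hx.2) hg0) (mul_nonneg hx.1 hg1))
    (mul_nonneg hβ (le_max_right _ _))

theorem stepCost_eq_g0 (hprev : 0 ≤ x (t - 1)) (hx : x t = 0) : stepCost β g0 g1 x t = g0 t := by
  simp [stepCost, hx, hprev]

theorem stepCost_one (hx0 : x 0 = 0) (hx1 : 0 ≤ x 1) :
    stepCost β g0 g1 x 1 = (1 - x 1) * g0 1 + x 1 * (g1 1 + β) := by
  rw [stepCost, Nat.sub_self, hx0, sub_zero, max_eq_left hx1]
  ring

theorem cChase_zero : cChase β g0 g1 0 = 0 := by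
  simp [cChase, Δfun]

theorem cChase_succ (hβ : 0 < β) (t : ℕ) :
    cChase β g0 g1 (t + 1) =
      min 1 (max 0 (cChase β g0 g1 t + (g0 (t + 1) - g1 (t + 1)) / β)) := by
  simp only [cChase, Δfun]
  rw [← min_add_add_left, ← max_add_add_left, ← min_div_div_right hβ.le,
    ← max_div_div_right hβ.le, add_zero, add_neg_cancel, zero_div, div_self hβ.ne',
    ← add_assoc, add_div]

theorem cChase_nonneg (hβ : 0 < β) (t : ℕ) : 0 ≤ cChase β g0 g1 t := by
  cases t with
  | zero => exact cChase_zero.ge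
  | succ t =>
    rw [cChase_succ hβ]
    exact le_min zero_le_one (le_max_left _ _)

theorem cChase_succ_of_mem_Icc (hβ : 0 < β)
    (h : cChase β g0 g1 t + (g0 (t + 1) - g1 (t + 1)) / β ∈ Set.Icc 0 1) :
    cChase β g0 g1 (t + 1) = cChase β g0 g1 t + (g0 (t + 1) - g1 (t + 1)) / β := by
  rw [cChase_succ hβ, max_eq_right h.1, min_eq_right h.2]

theorem cChase_succ_eq_zero (hβ : 0 < β)
    (h : β * cChase β g0 g1 t ≤ g1 (t + 1) - g0 (t + 1)) : cChase β g0 g1 (t + 1) = 0 := by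
  have hnonpos : cChase β g0 g1 t + (g0 (t + 1) - g1 (t + 1)) / β ≤ 0 := by
    rwa [← neg_sub (g1 (t + 1)), neg_div, ← sub_eq_add_neg, sub_nonpos, le_div_iff₀' hβ]
  rw [cChase_succ hβ, max_eq_left hnonpos, min_eq_right zero_le_one]

theorem cChase_eq_zero_of_lt {s : ℕ} (hβ : 0 < β)
    (h : ∀ t, s < t → t ≤ T → β * cChase β g0 g1 s ≤ g1 t - g0 t) (hst : s < t) (htT : t ≤ T) :
    cChase β g0 g1 t = 0 := by
  induction t, hst using Nat.le_induction with
  | base => exact cChase_succ_eq_zero hβ (h _ s.lt_succ_self htT)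
  | succ t hst ih =>
    apply cChase_succ_eq_zero hβ
    rw [ih (by lia), mul_zero]
    exact (mul_nonneg hβ.le (cChase_nonneg hβ s)).trans (h _ (by lia) htT)

namespace IsDemandSpike

theorem of_ite {a : ℝ} (hT : 1 ≤ T) (ha : 0 ≤ a) (haβ : a ≤ β)
    (hg0 : ∀ t, 1 ≤ t → t ≤ T → g0 t = if t = 1 then a else 0)
    (hg1 : ∀ t, 1 ≤ t → t ≤ T → g1 t = if t = 1 then 0 else a) :
    IsDemandSpike T β g0 g1 where
  g1_one_le := by simpa [hg0 1 le_rfl hT, hg1 1 le_rfl hT] using ha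
  g0_one_le := by simpa [hg0 1 le_rfl hT, hg1 1 le_rfl hT] using haβ
  g0_eq_zero t ht htT := by rw [hg0 t ht.le htT, if_neg ht.ne']
  sub_le_g1 t ht htT := by simp [hg0 1 le_rfl hT, hg1 1 le_rfl hT, hg1 t ht.le htT, ht.ne']

theorem cChase_one (h : IsDemandSpike T β g0 g1) (hβ : 0 < β) :
    cChase β g0 g1 1 = (g0 1 - g1 1) / β := by
  have hmem : cChase β g0 g1 0 + (g0 1 - g1 1) / β ∈ Set.Icc 0 1 := by
    rw [cChase_zero, zero_add]
    exact ⟨div_nonneg (sub_nonneg.2 h.g1_one_le) hβ.le,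
      (div_le_one hβ).2 (sub_le_iff_le_add'.2 h.g0_one_le)⟩
  rw [cChase_succ_of_mem_Icc hβ hmem, cChase_zero, zero_add]

theorem cChase_eq_zero (h : IsDemandSpike T β g0 g1) (hβ : 0 < β) (ht : 1 < t) (htT : t ≤ T) :
    cChase β g0 g1 t = 0 := by
  refine cChase_eq_zero_of_lt hβ (fun t ht htT ↦ ?_) ht htT
  rw [h.cChase_one hβ, mul_div_cancel₀ _ hβ.ne', h.g0_eq_zero t ht htT, sub_zero]
  exact h.sub_le_g1 t ht htT

theorem cost_eq_stepCost_one (h : IsDemandSpike T β g0 g1) (hT : 1 ≤ T) (hx1 : 0 ≤ x 1)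
    (hx : ∀ t, 1 < t → t ≤ T → x t = 0) : cost T β g0 g1 x = stepCost β g0 g1 x 1 := by
  rw [cost_eq_stepCost_one_add_sum hT, add_eq_left]
  refine Finset.sum_eq_zero fun t ht ↦ ?_
  obtain ⟨ht1, htT⟩ := Finset.mem_Ioc.1 ht
  have hprev : 0 ≤ x (t - 1) := by
    obtain rfl | ht2 := (Nat.succ_le_of_lt ht1).eq_or_lt
    · exact hx1
    · exact (hx (t - 1) (by lia) (by lia)).ge
  rw [stepCost_eq_g0 hprev (hx t ht1 htT), h.g0_eq_zero t ht1 htT]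

theorem g0_one_le_cost (h : IsDemandSpike T β g0 g1) (hT : 1 ≤ T) (hβ : 0 ≤ β)
    (hx : ∀ t, x t ∈ Set.Icc 0 1) (hx0 : x 0 = 0) : g0 1 ≤ cost T β g0 g1 x := by
  have htail : 0 ≤ ∑ t ∈ Finset.Ioc 1 T, stepCost β g0 g1 x t := by
    refine Finset.sum_nonneg fun t ht ↦ ?_
    obtain ⟨ht1, htT⟩ := Finset.mem_Ioc.1 ht
    exact stepCost_nonneg hβ (h.g0_eq_zero t ht1 htT).ge
      ((sub_nonneg.2 h.g1_one_le).trans (h.sub_le_g1 t ht1 htT)) (hx t)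
  calc
    g0 1 = (1 - x 1) * g0 1 + x 1 * g0 1 := by ring
    _ ≤ (1 - x 1) * g0 1 + x 1 * (g1 1 + β) := by gcongr; exacts [(hx 1).1, h.g0_one_le]
    _ = stepCost β g0 g1 x 1 := (stepCost_one hx0 (hx 1).1).symm
    _ ≤ cost T β g0 g1 x := by
      rw [cost_eq_stepCost_one_add_sum hT]
      exact le_add_of_nonneg_right htail

theorem copt_eq (h : IsDemandSpike T β g0 g1) (hT : 1 ≤ T) (hβ : 0 ≤ β) :
    copt T β g0 g1 = g0 1 := by
  refine IsLeast.csInf_eq ⟨⟨0, fun _ ↦ ⟨le_rfl, zero_le_one⟩, rfl, ?_⟩, ?_⟩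
  · rw [h.cost_eq_stepCost_one (x := 0) hT le_rfl fun _ _ _ ↦ rfl, stepCost_eq_g0 le_rfl rfl]
  · rintro _ ⟨x, hx, hx0, rfl⟩
    exact h.g0_one_le_cost hT hβ hx hx0

theorem cost_cChase (h : IsDemandSpike T β g0 g1) (hT : 1 ≤ T) (hβ : 0 < β) :
    cost T β g0 g1 (cChase β g0 g1) =
      g0 1 + (g0 1 - g1 1) * (1 - (g0 1 - g1 1) / β) := by
  have hx1 : 0 ≤ cChase β g0 g1 1 := cChase_nonneg hβ 1
  rw [h.cost_eq_stepCost_one hT hx1 fun _ ↦ h.cChase_eq_zero hβ,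
    stepCost_one cChase_zero hx1, h.cChase_one hβ]
  field

theorem cost_cChase_eq_mul_copt (h : IsDemandSpike T β g0 g1) (hT : 1 ≤ T) (hβ : 0 < β)
    (hg1 : g1 1 = 0) :
    cost T β g0 g1 (cChase β g0 g1) = (2 - g0 1 / β) * copt T β g0 g1 := by
  rw [h.cost_cChase hT hβ, h.copt_eq hT hβ.le, hg1, sub_zero]
  ring

end IsDemandSpike

-- Positivity of `copt` excludes the zero instance, which satisfies the inequality trivially.
theorem exists_two_sub_mul_copt_le_cost_cChase (hT : 1 ≤ T) (hβ : 0 < β) {ε : ℝ} (hε : 0 < ε) :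
    ∃ g0 g1 : ℕ → ℝ, (∀ t, 0 ≤ g0 t ∧ 0 ≤ g1 t) ∧ 0 < copt T β g0 g1 ∧
      (2 - ε) * copt T β g0 g1 ≤ cost T β g0 g1 (cChase β g0 g1) := by
  obtain ⟨a, ha, haβ, haε⟩ : ∃ a, 0 < a ∧ a ≤ β ∧ a ≤ ε * β :=
    ⟨min β (ε * β), lt_min hβ (mul_pos hε hβ), min_le_left _ _, min_le_right _ _⟩
  let g0 : ℕ → ℝ := fun t ↦ if t = 1 then a else 0
  let g1 : ℕ → ℝ := fun t ↦ if t = 1 then 0 else a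
  have h : IsDemandSpike T β g0 g1 := .of_ite hT ha.le haβ (fun _ _ _ ↦ rfl) fun _ _ _ ↦ rfl
  have hopt : 0 < copt T β g0 g1 := ha.trans_eq (h.copt_eq hT hβ.le).symm
  refine ⟨g0, g1, fun t ↦ ⟨?_, ?_⟩, hopt, ?_⟩
  · exact ite_nonneg ha.le le_rfl
  · exact ite_nonneg le_rfl ha.le
  · rw [h.cost_cChase_eq_mul_copt hT hβ rfl]
    gcongr
    exact (div_le_iff₀ hβ).2 haε

/-- tightness of the factor 2 for cCHASE: on the instance with
`g_1(0) = δβ`, `g_1(1) = 0` and `g_t(0) = 0`, `g_t(1) = δβ` for `t ≥ 2`, the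
algorithm cCHASE (playing `x_t = (β + Δ(t))/β`) outputs `x_1 = δ` and `x_t = 0`
for `2 ≤ t ≤ T`, its cost is `2δβ − δ²β`, and `cOpt = δβ`. Consequently, for
every `ε > 0` there is an instance with `CCost(cCHASE) ≥ (2 − ε)·cOpt`. -/
theorem stmt13 (β δ : ℝ) (hβ : 0 < β) (hδ0 : 0 < δ) (hδ1 : δ < 1)
    (T : ℕ) (hT : 2 ≤ T) (g0 g1 : ℕ → ℝ)
    (hg0 : ∀ t, 1 ≤ t → t ≤ T → g0 t = if t = 1 then δ * β else 0)
    (hg1 : ∀ t, 1 ≤ t → t ≤ T → g1 t = if t = 1 then 0 else δ * β) :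
    (β + Δfun β g0 g1 1) / β = δ ∧
    (∀ t, 2 ≤ t → t ≤ T → (β + Δfun β g0 g1 t) / β = 0) ∧
    cost T β g0 g1 (fun t => (β + Δfun β g0 g1 t) / β) = 2 * δ * β - δ ^ 2 * β ∧
    copt T β g0 g1 = δ * β ∧
    (∀ ε : ℝ, 0 < ε → ∃ (T' : ℕ) (β' : ℝ), 0 < β' ∧ ∃ g0' g1' : ℕ → ℝ,
      (∀ t, 1 ≤ t → t ≤ T' → 0 ≤ g0' t ∧ 0 ≤ g1' t) ∧
      (2 - ε) * copt T' β' g0' g1'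
        ≤ cost T' β' g0' g1' (fun t => (β' + Δfun β' g0' g1' t) / β')) := by
  have hT1 : 1 ≤ T := one_le_two.trans hT
  have hg01 : g0 1 = δ * β := hg0 1 le_rfl hT1
  have hg11 : g1 1 = 0 := hg1 1 le_rfl hT1
  have h : IsDemandSpike T β g0 g1 :=
    .of_ite hT1 (mul_pos hδ0 hβ).le (mul_le_of_le_one_left hβ.le hδ1.le) hg0 hg1
  have hopt : copt T β g0 g1 = δ * β := (h.copt_eq hT1 hβ.le).trans hg01
  have hdiv : g0 1 / β = δ := by rw [hg01, mul_div_cancel_right₀ _ hβ.ne']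
  refine ⟨?_, fun t ↦ h.cChase_eq_zero hβ, ?_, hopt, fun ε hε ↦ ?_⟩
  · exact (h.cChase_one hβ).trans (by rw [hg11, sub_zero, hdiv])
  · refine (h.cost_cChase_eq_mul_copt hT1 hβ hg11).trans ?_
    rw [hdiv, hopt]
    ring
  · obtain ⟨g0', g1', hnonneg, -, hle⟩ := exists_two_sub_mul_copt_le_cost_cChase hT1 hβ hε
    exact ⟨T, β, hβ, g0', g1', fun t _ _ ↦ hnonneg t, hle⟩
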